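/- arXiv:2402.05161 — 4 statements merged into one kernel-verified Lean document; each statement's English description precedes it below -/
import Mathlib

section
/- Let T be an incomplete table over a schema R and K ⊆ R a set of attributes. Suppose that the sub-table of T consisting of its K-total tuples satisfies the strongly possible key sp⟨K⟩. Then there exists a set U of tuples of T of minimum cardinality among all sets whose removal makes sp⟨K⟩ hold, such that every tuple of U is non-K-total (i.e., every tuple of U has a ⊥ in some attribute of K) and T∖U satisfies sp⟨K⟩. -/
/-- A tuple over schema `R`: assigns to each attribute either a value (`some v`)
or the missing value `⊥` (`none`). -/
abbrev Tuple (R : Type) := R → Option ℕ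

/-- Tuples `t₁`, `t₂` are weakly similar on `X ⊆ R`. -/
def weaklySimilarOn {R : Type} (X : Set R) (t₁ t₂ : Tuple R) : Prop :=
  ∀ A ∈ X, t₁ A = t₂ A ∨ t₁ A = none ∨ t₂ A = none

/-- Active domain of attribute `A` in table `T` (a table is a finite multiset of
tuples, encoded as a function from a finite index type `ι`). -/
def VD {R ι : Type} (T : ι → Tuple R) (A : R) : Set ℕ :=
  {v | ∃ i, T i A = some v}

/-- `T'` is a strongly possible world of `T`: a total table, tuple-wise weakly
similar to `T`, with all values taken from active domains of `T`. -/
def IsSpWorld {R ι : Type} (T : ι → Tuple R) (T' : ι → R → ℕ) : Prop :=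
  ∀ i A, (T i A = none ∨ T i A = some (T' i A)) ∧ T' i A ∈ VD T A

/-- `K` is a strongly possible key of `T`: some spWorld has pairwise distinct
`K`-projections. -/
def spKey {R ι : Type} (T : ι → Tuple R) (K : Set R) : Prop :=
  ∃ T', IsSpWorld T T' ∧ ∀ i j : ι, (∀ A ∈ K, T' i A = T' j A) → i = j

/-- The strongly possible functional dependency `X →sp Y` holds in `T`. -/
def spFD {R ι : Type} (T : ι → Tuple R) (X Y : Set R) : Prop :=
  ∃ T', IsSpWorld T T' ∧
    ∀ i j : ι, (∀ A ∈ X, T' i A = T' j A) → ∀ A ∈ Y, T' i A = T' j A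

/-- A family `𝒦` of key candidates is satisfied simultaneously in one spWorld. -/
def spKeySystem {R ι : Type} (T : ι → Tuple R) (𝒦 : Set (Set R)) : Prop :=
  ∃ T', IsSpWorld T T' ∧ ∀ K ∈ 𝒦, ∀ i j : ι, (∀ A ∈ K, T' i A = T' j A) → i = j

/-- `t` is `K`-total: no `⊥` in any attribute of `K`. -/
def KTotal {R : Type} (K : Set R) (t : Tuple R) : Prop := ∀ A ∈ K, t A ≠ none

/-- Minimum number of tuples to remove from `T` so that `sp⟨K⟩` holds. -/
noncomputable def g3KeyNum {R ι : Type} (T : ι → Tuple R) (K : Set R) : ℕ :=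
  sInf {k : ℕ | ∃ S : Finset ι, S.card = k ∧
      spKey (fun i : {i : ι // i ∉ S} => T i.1) K}

/-- `g₃(K)`: the minimum ratio `|S|/|T|` over subsets `S` of the tuples of `T`
whose removal makes `sp⟨K⟩` hold. -/
noncomputable def g3Key {R ι : Type} [Fintype ι] (T : ι → Tuple R) (K : Set R) : ℚ :=
  (g3KeyNum T K : ℚ) / (Fintype.card ι : ℚ)

/-- Minimum number of tuples to add to `T` so that `sp⟨K⟩` holds. -/
noncomputable def g5KeyNum {R ι : Type} (T : ι → Tuple R) (K : Set R) : ℕ :=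
  sInf {p : ℕ | ∃ S : Fin p → Tuple R, spKey (Sum.elim T S) K}

/-- `g₅(K)`: the minimum ratio `|S|/|T|` over multisets `S` of added tuples such
that `T ∪ S` satisfies `sp⟨K⟩` (active domains taken in the enlarged table). -/
noncomputable def g5Key {R ι : Type} [Fintype ι] (T : ι → Tuple R) (K : Set R) : ℚ :=
  (g5KeyNum T K : ℚ) / (Fintype.card ι : ℚ)

/-- Minimum number of tuples to remove from `T` so that `X →sp Y` holds. -/
noncomputable def g3FDNum {R ι : Type} (T : ι → Tuple R) (X Y : Set R) : ℕ :=
  sInf {k : ℕ | ∃ S : Finset ι, S.card = k ∧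
      spFD (fun i : {i : ι // i ∉ S} => T i.1) X Y}

/-- `g₃(σ)` for an spFD `σ : X →sp Y`. -/
noncomputable def g3FD {R ι : Type} [Fintype ι] (T : ι → Tuple R) (X Y : Set R) : ℚ :=
  (g3FDNum T X Y : ℚ) / (Fintype.card ι : ℚ)

/-- Minimum number of tuples to add to `T` so that `X →sp Y` holds. -/
noncomputable def g5FDNum {R ι : Type} (T : ι → Tuple R) (X Y : Set R) : ℕ :=
  sInf {p : ℕ | ∃ S : Fin p → Tuple R, spFD (Sum.elim T S) X Y}

/-- `g₅(σ)` for an spFD `σ : X →sp Y`. -/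
noncomputable def g5FD {R ι : Type} [Fintype ι] (T : ι → Tuple R) (X Y : Set R) : ℚ :=
  (g5FDNum T X Y : ℚ) / (Fintype.card ι : ℚ)

/-- Minimum number of tuples to remove from `T` so that `sp⟨𝒦⟩` holds. -/
noncomputable def g3SysNum {R ι : Type} (T : ι → Tuple R) (𝒦 : Set (Set R)) : ℕ :=
  sInf {k : ℕ | ∃ S : Finset ι, S.card = k ∧
      spKeySystem (fun i : {i : ι // i ∉ S} => T i.1) 𝒦}

/-- `g₃(𝒦)` for a system `𝒦` of strongly possible keys. -/
noncomputable def g3Sys {R ι : Type} [Fintype ι] (T : ι → Tuple R) (𝒦 : Set (Set R)) : ℚ :=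
  (g3SysNum T 𝒦 : ℚ) / (Fintype.card ι : ℚ)

/-- Adjacency in the `K`-extension graph: the (`K`-total) tuple `f` over
`∏_{A ∈ K} VD(A)` is weakly similar to `t` on `K`. -/
def adjExt {R : Type} (K : Set R) (t : Tuple R) (f : ↥K → ℕ) : Prop :=
  ∀ A : ↥K, t A.1 = none ∨ t A.1 = some (f A)

/-- The `T'`-side vertex class of the `K`-extension graph of `T`: the `K`-total
tuples over `∏_{A ∈ K} VD(A)` weakly similar on `K` to at least one tuple of `T`. -/
def extSide {R ι : Type} (T : ι → Tuple R) (K : Set R) : Set (↥K → ℕ) :=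
  {f | (∀ A : ↥K, f A ∈ VD T A.1) ∧ ∃ i, adjExt K (T i) f}

/-- A matching of the `K`-extension bipartite graph of `T`. -/
def IsExtMatching {R ι : Type} (T : ι → Tuple R) (K : Set R)
    (M : Finset (ι × (↥K → ℕ))) : Prop :=
  (∀ e ∈ M, e.2 ∈ extSide T K ∧ adjExt K (T e.1) e.2) ∧
  (∀ e ∈ M, ∀ e' ∈ M, e.1 = e'.1 → e = e') ∧
  (∀ e ∈ M, ∀ e' ∈ M, e.2 = e'.2 → e = e')

/-- `ν(G)`: the maximum size of a matching in the `K`-extension graph of `T`. -/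
noncomputable def nuExt {R ι : Type} (T : ι → Tuple R) (K : Set R) : ℕ :=
  sSup {n : ℕ | ∃ M : Finset (ι × (↥K → ℕ)), IsExtMatching T K M ∧ M.card = n}

/-- `ℓ(t)`: the number of `K`-total tuples in `∏_{A ∈ K} VD(A)` weakly similar
to `t` on `K` (the degree of `t` in the `K`-extension graph). -/
noncomputable def ellK {R ι : Type} (T : ι → Tuple R) (K : Set R) (t : Tuple R) : ℕ :=
  Set.ncard {f : ↥K → ℕ | (∀ A : ↥K, f A ∈ VD T A.1) ∧ adjExt K t f}

/-- `T_j*`: the set of `K`-total tuples over `∏_{A ∈ K} VD(A)` weakly similar on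
`K` to some tuple among the first `j` tuples of `T`. -/
def TjStar {R : Type} {m : ℕ} (T : Fin m → Tuple R) (K : Set R) (j : ℕ) : Set (↥K → ℕ) :=
  {f | (∀ A : ↥K, f A ∈ VD T A.1) ∧ ∃ i : Fin m, i.1 < j ∧ adjExt K (T i) f}

/-- `ν(G*)`: the maximum matching size of the subgraph of the `K`-extension
graph induced on `T_j ∪ T_j*`. -/
noncomputable def nuExtStar {R : Type} {m : ℕ} (T : Fin m → Tuple R) (K : Set R) (j : ℕ) : ℕ :=
  sSup {n : ℕ | ∃ M : Finset (Fin m × (↥K → ℕ)), IsExtMatching T K M ∧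
    (∀ e ∈ M, e.1.1 < j ∧ e.2 ∈ TjStar T K j) ∧ M.card = n}

/-!
A `K`-total tuple has only one possible completion on `K`. Given a removal set `S` and a choice of
pairwise distinct completions of the remaining tuples, put every `K`-total tuple of `S` back and
remove instead the remaining tuple, if any, whose completion is the one that the restored tuple
needs. That tuple is not `K`-total, because the completions of the `K`-total tuples are pairwise
distinct, and it is determined by the restored tuple, so the removal set does not grow. Values of
the active domains that it contributed on `K` are contributed by the restored tuple.
-/

section Exchange

variable {ι β : Type*} {F : ι → β} {S P : Set ι}

/-- The removal set obtained from `S` by putting back the elements of `P` and removing instead the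
elements outside `P` that collide with `P` under `F`. -/
def exchangeSet (F : ι → β) (S P : Set ι) : Set ι :=
  (S ∪ F ⁻¹' (F '' P)) \ P

theorem subset_compl_exchangeSet : P ⊆ (exchangeSet F S P)ᶜ :=
  fun _ hi hU => hU.2 hi

theorem notMem_of_notMem_exchangeSet {i : ι} (hi : i ∉ exchangeSet F S P) (hiP : i ∉ P) :
    i ∉ S :=
  fun hiS => hi ⟨.inl hiS, hiP⟩

theorem mem_image_of_mem_exchangeSet {i : ι} (hi : i ∈ exchangeSet F S P) (hiS : i ∉ S) :
    F i ∈ F '' P :=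
  hi.1.resolve_left hiS

theorem compl_exchangeSet : (exchangeSet F S P)ᶜ = P ∪ (Sᶜ \ F ⁻¹' (F '' P)) := by
  have hP : P ⊆ F ⁻¹' (F '' P) := Set.subset_preimage_image F P
  ext i
  have := @hP i
  simp only [exchangeSet, Set.mem_compl_iff, Set.mem_sdiff, Set.mem_union]
  tauto

theorem injOn_compl_exchangeSet (hS : Set.InjOn F Sᶜ) (hP : Set.InjOn F P) :
    Set.InjOn F (exchangeSet F S P)ᶜ := by
  have hdisj : Disjoint P (Sᶜ \ F ⁻¹' (F '' P)) :=
    Set.disjoint_sdiff_right.mono_left (Set.subset_preimage_image F P)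
  rw [compl_exchangeSet, Set.injOn_union hdisj]
  exact ⟨hP, hS.mono Set.sdiff_subset, fun i hi j hj hij => hj.2 ⟨i, hi, hij⟩⟩

theorem image_exchangeSet_sdiff_subset (hS : Set.InjOn F Sᶜ) :
    F '' (exchangeSet F S P \ S) ⊆ F '' (S \ exchangeSet F S P) := by
  rintro _ ⟨i, ⟨hiU, hiS⟩, rfl⟩
  obtain ⟨t, htP, hti⟩ := mem_image_of_mem_exchangeSet hiU hiS
  have htS : t ∈ S := by
    by_contra htS
    exact hiU.2 (hS htS hiS hti ▸ htP)
  exact ⟨t, ⟨htS, subset_compl_exchangeSet htP⟩, hti⟩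

theorem encard_exchangeSet_le (hS : Set.InjOn F Sᶜ) :
    (exchangeSet F S P).encard ≤ S.encard := by
  set U := exchangeSet F S P
  have hsdiff : (U \ S).encard ≤ (S \ U).encard := calc
    (U \ S).encard = (F '' (U \ S)).encard := (hS.mono fun _ hi => hi.2).encard_image.symm
    _ ≤ (F '' (S \ U)).encard := Set.encard_le_encard (image_exchangeSet_sdiff_subset hS)
    _ ≤ (S \ U).encard := Set.encard_image_le F _
  calc
    U.encard = (U \ S).encard + (U ∩ S).encard := (Set.encard_sdiff_add_encard_inter U S).symm
    _ ≤ (S \ U).encard + (S ∩ U).encard := by rw [Set.inter_comm U S]; gcongr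
    _ = S.encard := Set.encard_sdiff_add_encard_inter S U

end Exchange

section Tables

variable {R ι : Type} {T : ι → Tuple R} {K : Set R}

theorem adjExt.eq_of_kTotal {t : Tuple R} {f g : K → ℕ} (ht : KTotal K t) (hf : adjExt K t f)
    (hg : adjExt K t g) : f = g := by
  funext A
  have hA : t A ≠ none := ht A A.2
  exact Option.some.inj (((hf A).resolve_left hA).symm.trans ((hg A).resolve_left hA))

theorem VD_domRestrict_mono {s u : Set ι} (h : s ⊆ u) (A : R) :
    VD (s.domRestrict T) A ⊆ VD (u.domRestrict T) A :=
  fun _ ⟨i, hi⟩ => ⟨⟨i, h i.2⟩, hi⟩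

/-- `F` is a matching of the `K`-extension graph of the sub-table of `T` on the rows `s` that covers
every row of `s`: it selects pairwise distinct completions on `K`. The values of `F` outside `s` are
irrelevant; having `F` defined on all of `ι` lets one function serve several sub-tables. -/
structure IsRowMatching (T : ι → Tuple R) (K : Set R) (s : Set ι) (F : ι → K → ℕ) : Prop where
  injOn : Set.InjOn F s
  adjExt : ∀ i ∈ s, adjExt K (T i) (F i)
  mem_VD : ∀ i ∈ s, ∀ A : K, F i A ∈ VD (s.domRestrict T) A

theorem IsRowMatching.congr {s : Set ι} {F G : ι → K → ℕ} (hF : IsRowMatching T K s F)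
    (hFG : Set.EqOn F G s) : IsRowMatching T K s G where
  injOn := hF.injOn.congr hFG
  adjExt i hi := hFG hi ▸ hF.adjExt i hi
  mem_VD i hi := hFG hi ▸ hF.mem_VD i hi

theorem exists_isRowMatching_of_spKey {s : Set ι} (h : spKey (s.domRestrict T) K) :
    ∃ F, IsRowMatching T K s F := by
  classical
  obtain ⟨W, hW, hinj⟩ := h
  let F : ι → K → ℕ := fun i A => if hi : i ∈ s then W ⟨i, hi⟩ A else 0
  have hF (i : ι) (hi : i ∈ s) (A : K) : F i A = W ⟨i, hi⟩ A := dif_pos hi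
  refine ⟨F, fun i hi j hj hij => ?_, fun i hi A => ?_, fun i hi A => ?_⟩
  · have hWij : ∀ A ∈ K, W ⟨i, hi⟩ A = W ⟨j, hj⟩ A := fun A hA => by
      rw [← hF i hi ⟨A, hA⟩, ← hF j hj ⟨A, hA⟩, hij]
    exact congrArg Subtype.val (hinj _ _ hWij)
  · exact hF i hi A ▸ (hW ⟨i, hi⟩ A).1
  · exact hF i hi A ▸ (hW ⟨i, hi⟩ A).2

theorem VD_nonempty_of_spKey {s : Set ι} (h : spKey (s.domRestrict T) K) (hs : s.Nonempty) (A : R) :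
    (VD (s.domRestrict T) A).Nonempty := by
  obtain ⟨W, hW, -⟩ := h
  obtain ⟨i, hi⟩ := hs
  exact ⟨_, (hW ⟨i, hi⟩ A).2⟩

theorem IsRowMatching.spKey {s : Set ι} {F : ι → K → ℕ} (hF : IsRowMatching T K s F)
    (hVD : s.Nonempty → ∀ A, (VD (s.domRestrict T) A).Nonempty) : spKey (s.domRestrict T) K := by
  have hcell (i : s) (A : R) : ∃ v, (T i A = none ∨ T i A = some v) ∧ v ∈ VD (s.domRestrict T) A ∧
      ∀ hA : A ∈ K, v = F i ⟨A, hA⟩ := by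
    by_cases hA : A ∈ K
    · exact ⟨F i ⟨A, hA⟩, hF.adjExt i i.2 ⟨A, hA⟩, hF.mem_VD i i.2 ⟨A, hA⟩, fun _ => rfl⟩
    · rcases hTi : T i A with _ | v
      · obtain ⟨v, hv⟩ := hVD ⟨i, i.2⟩ A
        exact ⟨v, .inl rfl, hv, fun h => absurd h hA⟩
      · exact ⟨v, .inr rfl, ⟨i, hTi⟩, fun h => absurd h hA⟩
  choose W hW hmem hWF using hcell
  refine ⟨W, fun i A => ⟨hW i A, hmem i A⟩, fun i j hij => Subtype.ext (hF.injOn i.2 j.2 ?_)⟩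
  funext A
  rw [← hWF i A A.2, ← hWF j A A.2, hij A A.2]

theorem VD_compl_subset_VD_compl_exchangeSet {S P : Set ι} {F : ι → K → ℕ}
    (hP : ∀ i ∈ P, KTotal K (T i)) (hFS : ∀ i ∈ Sᶜ, adjExt K (T i) (F i))
    (hFP : ∀ i ∈ P, adjExt K (T i) (F i)) (A : K) :
    VD (Sᶜ.domRestrict T) A ⊆ VD ((exchangeSet F S P)ᶜ.domRestrict T) A := by
  rintro v ⟨⟨j, hjS⟩, hj : T j A = some v⟩
  by_cases hjU : j ∈ exchangeSet F S P
  · obtain ⟨t, htP, htj⟩ := mem_image_of_mem_exchangeSet hjU hjS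
    have hFj : T j A = some (F j A) := (hFS j hjS A).resolve_left (by simp [hj])
    have hFt : T t A = some (F t A) := (hFP t htP A).resolve_left (hP t htP A A.2)
    have htv : T t A = some v := by rw [hFt, htj, ← hFj, hj]
    exact ⟨⟨t, subset_compl_exchangeSet htP⟩, htv⟩
  · exact ⟨⟨j, hjU⟩, hj⟩

theorem IsRowMatching.compl_exchangeSet {S P : Set ι} {F : ι → K → ℕ}
    (hP : ∀ i ∈ P, KTotal K (T i)) (hFS : IsRowMatching T K Sᶜ F)
    (hFP : IsRowMatching T K P F) : IsRowMatching T K (exchangeSet F S P)ᶜ F where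
  injOn := injOn_compl_exchangeSet hFS.injOn hFP.injOn
  adjExt i hi := by
    by_cases hiP : i ∈ P
    · exact hFP.adjExt i hiP
    · exact hFS.adjExt i (notMem_of_notMem_exchangeSet hi hiP)
  mem_VD i hi A := by
    by_cases hiP : i ∈ P
    · exact VD_domRestrict_mono subset_compl_exchangeSet A.1 (hFP.mem_VD i hiP A)
    · exact VD_compl_subset_VD_compl_exchangeSet hP hFS.adjExt hFP.adjExt A
        (hFS.mem_VD i (notMem_of_notMem_exchangeSet hi hiP) A)

theorem exists_common_isRowMatching {s P : Set ι} {F G : ι → K → ℕ}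
    (hP : ∀ i ∈ P, KTotal K (T i)) (hF : IsRowMatching T K s F) (hG : IsRowMatching T K P G) :
    ∃ H, IsRowMatching T K s H ∧ IsRowMatching T K P H := by
  classical
  refine ⟨P.piecewise G F, hF.congr fun i hi => ?_, hG.congr (P.piecewise_eqOn G F).symm⟩
  by_cases hiP : i ∈ P
  · rw [Set.piecewise_eq_of_mem _ _ _ hiP]
    exact (hF.adjExt i hi).eq_of_kTotal (hP i hiP) (hG.adjExt i hiP)
  · rw [Set.piecewise_eq_of_notMem _ _ _ hiP]

theorem VD_compl_exchangeSet_nonempty {S P : Set ι} {F : ι → K → ℕ}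
    (hS : spKey (Sᶜ.domRestrict T) K) (hP : spKey (P.domRestrict T) K)
    (hne : (exchangeSet F S P)ᶜ.Nonempty) (A : R) :
    (VD ((exchangeSet F S P)ᶜ.domRestrict T) A).Nonempty := by
  rcases P.eq_empty_or_nonempty with rfl | hPne
  · have hU : exchangeSet F S ∅ = S := by simp [exchangeSet]
    rw [hU] at hne ⊢
    exact VD_nonempty_of_spKey hS hne A
  · exact (VD_nonempty_of_spKey hP hPne A).mono (VD_domRestrict_mono subset_compl_exchangeSet A)

theorem exists_disjoint_spKey_compl_encard_le {S P : Set ι} (hPtotal : ∀ i ∈ P, KTotal K (T i))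
    (hP : spKey (P.domRestrict T) K) (hS : spKey (Sᶜ.domRestrict T) K) :
    ∃ U : Set ι, Disjoint U P ∧ spKey (Uᶜ.domRestrict T) K ∧ U.encard ≤ S.encard := by
  obtain ⟨F₀, hF₀⟩ := exists_isRowMatching_of_spKey hS
  obtain ⟨G₀, hG₀⟩ := exists_isRowMatching_of_spKey hP
  obtain ⟨F, hFS, hFP⟩ := exists_common_isRowMatching hPtotal hF₀ hG₀
  exact ⟨exchangeSet F S P, Set.disjoint_sdiff_left,
    (hFS.compl_exchangeSet hPtotal hFP).spKey (VD_compl_exchangeSet_nonempty hS hP),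
    encard_exchangeSet_le hFS.injOn⟩

theorem spKey_of_isEmpty [IsEmpty ι] : spKey T K :=
  ⟨isEmptyElim, isEmptyElim, isEmptyElim⟩

end Tables

theorem stmt0_general {R ι : Type} (T : ι → Tuple R) (K : Set R)
    (h : spKey (fun i : {i : ι // KTotal K (T i)} => T i.1) K)
    (hremoval : ∃ S : Finset ι, spKey (fun i : {i : ι // i ∉ S} => T i.1) K) :
    ∃ U : Finset ι,
      (∀ i ∈ U, ¬ KTotal K (T i)) ∧
      spKey (fun i : {i : ι // i ∉ U} => T i.1) K ∧
      U.card = sInf {k : ℕ | ∃ S : Finset ι, S.card = k ∧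
        spKey (fun i : {i : ι // i ∉ S} => T i.1) K} := by
  obtain ⟨S₀, hS₀⟩ := hremoval
  obtain ⟨S, hcard, hS⟩ := Nat.sInf_mem (⟨_, S₀, rfl, hS₀⟩ : {k : ℕ | ∃ S : Finset ι, S.card = k ∧
    spKey (fun i : {i : ι // i ∉ S} => T i.1) K}.Nonempty)
  obtain ⟨U, hdisj, hU, hUS⟩ := exists_disjoint_spKey_compl_encard_le
    (S := (S : Set ι)) (P := {i | KTotal K (T i)}) (fun _ hi => hi) h hS
  rw [Set.encard_coe_eq_coe_finsetCard] at hUS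
  lift U to Finset ι using Set.finite_of_encard_le_coe hUS
  rw [Set.encard_coe_eq_coe_finsetCard, Nat.cast_le] at hUS
  exact ⟨U, fun i hi => Set.disjoint_left.1 hdisj hi, hU,
    le_antisymm (hUS.trans_eq hcard) (Nat.sInf_le ⟨U, rfl, hU⟩)⟩

/-- If the `K`-total part of `T` satisfies `sp⟨K⟩`, then some
minimum-cardinality removal set `U` making `sp⟨K⟩` hold consists entirely of
non-`K`-total tuples. -/
theorem stmt0 {R ι : Type} [Fintype R] [Fintype ι] (T : ι → Tuple R) (K : Set R)
    (h : spKey (fun i : {i : ι // KTotal K (T i)} => T i.1) K) :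
    ∃ U : Finset ι,
      (∀ i ∈ U, ¬ KTotal K (T i)) ∧
      spKey (fun i : {i : ι // i ∉ U} => T i.1) K ∧
      U.card = sInf {k : ℕ | ∃ S : Finset ι, S.card = k ∧
        spKey (fun i : {i : ι // i ∉ S} => T i.1) K} := by
  have : IsEmpty {i : ι // i ∉ Finset.univ} := ⟨fun i => i.2 (Finset.mem_univ _)⟩
  exact stmt0_general T K h ⟨Finset.univ, spKey_of_isEmpty⟩
end

section
/- For every rational number p/q with 0 ≤ p/q < 1 and every natural number N, there exists an incomplete table T over the two-attribute schema {A₁, A₂} with more than N rows such that g₃({A₁,A₂}) − g₅({A₁,A₂}) = p/q. -/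
/-!
Let `T` consist of pairwise distinct total tuples together with tuples that are `⊥` everywhere. The
`⊥`-tuples may be completed freely, so `sp⟨R⟩` holds for `T` exactly when `|T| ≤ ∏ |VD(A)|`.
Deleting `⊥`-tuples does not change the active domains, and an added tuple enlarges each of them by
at most one, with equality if its values are fresh. Hence `g₃` deletes `|T| - ∏ |VD(A)|` tuples
(none if this is negative), while `g₅` adds the least `t` with `|T| + t ≤ ∏ (|VD(A)| + t)`.

For `c` total tuples `(0, 0), …, (0, c - 1)` and `n` tuples `(⊥, ⊥)` these numbers are `n` and the
least `t` with `n ≤ t (c + t)`. Put `d = q - p`, `r = ⌊p / d⌋`, `t = r + 1`, `n = p k + t` and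
`c = d k - t` with `k` large: then the table has `q k` rows, `g₅` adds `t` tuples, and the
difference of the two measures is `p k / (q k)`.
-/

open Finset

theorem exists_injective_extension_of_card_le {α β : Type*} [Fintype α] {s : Finset α}
    {P : Finset β} {f : α → β} (hcard : Fintype.card α ≤ #P) (hmaps : Set.MapsTo f s P)
    (hinj : Set.InjOn f s) :
    ∃ g : α → β, g.Injective ∧ (∀ a, g a ∈ P) ∧ ∀ a ∈ s, g a = f a := by
  classical
  obtain ⟨Q, hQ, hQP, hQcard⟩ := exists_subsuperset_card_eq (image_subset_iff.mpr hmaps)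
    (card_image_le.trans (card_le_univ s)) hcard
  obtain ⟨g, hg⟩ := exists_equiv_extend_of_card_eq hQcard.symm hQ hinj
  exact ⟨fun a => g a, Subtype.val_injective.comp g.injective, fun a => hQP (g a).2, hg⟩

section ActiveDomain

variable {R ι κ : Type}

theorem finite_VD [Finite ι] (T : ι → Tuple R) (A : R) : (VD T A).Finite :=
  ((Set.finite_range (T · A)).preimage (Option.some_injective ℕ).injOn).subset fun _ hv => hv

theorem ncard_VD_le_card [Fintype ι] (T : ι → Tuple R) (A : R) :
    (VD T A).ncard ≤ Fintype.card ι :=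
  calc (VD T A).ncard = (some '' VD T A).ncard :=
        (Set.ncard_image_of_injective _ (Option.some_injective ℕ)).symm
    _ ≤ ((T · A) '' Set.univ).ncard :=
        Set.ncard_le_ncard (by rintro _ ⟨v, ⟨i, hi⟩, rfl⟩; exact ⟨i, trivial, hi⟩)
    _ ≤ (Set.univ : Set ι).ncard := Set.ncard_image_le
    _ = Fintype.card ι := by rw [Set.ncard_univ, Nat.card_eq_fintype_card]

theorem VD_comp_subset (T : ι → Tuple R) (e : κ → ι) (A : R) : VD (T ∘ e) A ⊆ VD T A :=
  fun _ ⟨k, hk⟩ => ⟨e k, hk⟩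

theorem VD_sumElim (T : ι → Tuple R) (S : κ → Tuple R) (A : R) :
    VD (Sum.elim T S) A = VD T A ∪ VD S A := by
  ext v
  simp [VD]

theorem exists_forall_mem_VD_lt [Finite R] [Finite ι] (T : ι → Tuple R) :
    ∃ b, ∀ A, ∀ v ∈ VD T A, v < b := by
  obtain ⟨M, hM⟩ := (Set.finite_iUnion fun A => finite_VD T A).bddAbove
  exact ⟨M + 1, fun A v hv => Nat.lt_succ_of_le (hM (Set.mem_iUnion_of_mem A hv))⟩

end ActiveDomain

section LowerBounds

variable {R ι κ : Type} [Fintype ι] [Fintype κ] {T : ι → Tuple R} {K : Finset R}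

theorem card_le_prod_ncard_VD_of_spKey (h : spKey T K) :
    Fintype.card ι ≤ ∏ A ∈ K, (VD T A).ncard := by
  obtain ⟨T', hworld, hdistinct⟩ := h
  have : ∀ A, Finite (VD T A) := finite_VD T
  let proj : ι → ∀ A : K, VD T A := fun i A => ⟨T' i A, (hworld i A).2⟩
  have proj_injective : proj.Injective := fun i j hij =>
    hdistinct i j fun A hA => congrArg Subtype.val (congrFun hij ⟨A, hA⟩)
  calc Fintype.card ι = Nat.card ι := Nat.card_eq_fintype_card.symm
    _ ≤ Nat.card (∀ A : K, VD T A) := Nat.card_le_card_of_injective proj proj_injective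
    _ = ∏ A : K, (VD T A).ncard := Nat.card_pi
    _ = ∏ A ∈ K, (VD T A).ncard := prod_coe_sort K fun A => (VD T A).ncard

variable (T K) in
theorem card_sub_prod_le_g3KeyNum :
    Fintype.card ι - ∏ A ∈ K, (VD T A).ncard ≤ g3KeyNum T K := by
  classical
  have hne : {k | ∃ S : Finset ι, #S = k ∧ spKey (fun i : {i // i ∉ S} => T i.1) K}.Nonempty :=
    ⟨_, univ, rfl, fun _ _ => 0, fun i => absurd (mem_univ _) i.2,
      fun i => absurd (mem_univ _) i.2⟩
  obtain ⟨S, hcard, hkey⟩ := Nat.sInf_mem hne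
  have hprod : Fintype.card {i // i ∉ S} ≤ ∏ A ∈ K, (VD T A).ncard :=
    (card_le_prod_ncard_VD_of_spKey hkey).trans <| prod_le_prod' fun A _ =>
      Set.ncard_le_ncard (VD_comp_subset T Subtype.val A) (finite_VD T A)
  have hcompl : Fintype.card {i // i ∉ S} = Fintype.card ι - #S := by
    simp [Fintype.card_subtype_compl]
  unfold g3KeyNum
  omega

theorem card_add_card_le_prod_of_spKey_sumElim {S : κ → Tuple R} (h : spKey (Sum.elim T S) K) :
    Fintype.card ι + Fintype.card κ ≤ ∏ A ∈ K, ((VD T A).ncard + Fintype.card κ) :=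
  calc Fintype.card ι + Fintype.card κ = Fintype.card (ι ⊕ κ) := Fintype.card_sum.symm
    _ ≤ ∏ A ∈ K, (VD (Sum.elim T S) A).ncard := card_le_prod_ncard_VD_of_spKey h
    _ ≤ ∏ A ∈ K, ((VD T A).ncard + Fintype.card κ) := prod_le_prod' fun A _ => by
        rw [VD_sumElim]
        exact (Set.ncard_union_le _ _).trans (Nat.add_le_add_left (ncard_VD_le_card S A) _)

end LowerBounds

section TotalTuples

variable {R ι : Type} [Fintype R] [Finite ι] {T : ι → Tuple R}

open Classical in
/-- The set `∏ VD(A)` of all total tuples over the active domains of `T`. -/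
noncomputable def totalTuples (T : ι → Tuple R) : Finset (R → ℕ) :=
  Fintype.piFinset fun A => (finite_VD T A).toFinset

theorem mem_totalTuples {f : R → ℕ} : f ∈ totalTuples T ↔ ∀ A, f A ∈ VD T A := by
  simp [totalTuples]

variable (T) in
theorem card_totalTuples : #(totalTuples T) = ∏ A, (VD T A).ncard := by
  simp [totalTuples, Set.ncard_eq_toFinset_card _ (finite_VD T _)]

end TotalTuples

/-- The tuple whose value is missing in every attribute. -/
def nullTuple (R : Type) : Tuple R := fun _ => none

/-- A null-padded table: pairwise distinct total tuples together with any number of copies of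
`nullTuple`. For these tables both `g₃` and `g₅` of the full schema are determined by counting. A
total tuple is encoded as `some ∘ f`. -/
structure IsNullPadded {R ι : Type} (T : ι → Tuple R) : Prop where
  total_of_ne_null : ∀ i, T i ≠ nullTuple R → ∃ f : R → ℕ, T i = some ∘ f
  eq_of_eq : ∀ i j, T i ≠ nullTuple R → T i = T j → i = j

/-- The total table with rows `(b, b, …), (b + 1, b + 1, …), …, (b + t - 1, b + t - 1, …)`, which
contributes `t` new values to every attribute of a table whose values are all below `b`. -/
def freshTable (R : Type) (b t : ℕ) (j : Fin t) : Tuple R := fun _ => some (b + j)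

theorem VD_freshTable {R : Type} (b t : ℕ) (A : R) :
    VD (freshTable R b t) A = Set.Ico b (b + t) := by
  ext v
  simp only [VD, freshTable, Set.mem_ofPred_eq, Option.some.injEq, Set.mem_Ico]
  constructor
  · rintro ⟨j, rfl⟩
    omega
  · rintro ⟨hb, ht⟩
    exact ⟨⟨v - b, by omega⟩, by simp only; omega⟩

namespace IsNullPadded

variable {R ι κ : Type} {T : ι → Tuple R}

theorem comp_injective (hT : IsNullPadded T) {e : κ → ι} (he : e.Injective) :
    IsNullPadded (T ∘ e) where
  total_of_ne_null i := hT.total_of_ne_null (e i)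
  eq_of_eq i j hi hij := he (hT.eq_of_eq (e i) (e j) hi hij)

theorem sumElim_freshTable (hT : IsNullPadded T) {b : ℕ} (hb : ∀ A, ∀ v ∈ VD T A, v < b) (t : ℕ) :
    IsNullPadded (Sum.elim T (freshTable R b t)) where
  total_of_ne_null
    | .inl i, hi => hT.total_of_ne_null i hi
    | .inr j, _ => ⟨fun _ => b + j, rfl⟩
  eq_of_eq i j hi hij := by
    obtain ⟨A, -⟩ := Function.ne_iff.mp hi
    have fresh (i : ι) (j : Fin t) : T i ≠ freshTable R b t j := fun h => by
      have := hb A (b + j) ⟨i, congrFun h A⟩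
      omega
    rcases i with i | i <;> rcases j with j | j
    · exact congrArg Sum.inl (hT.eq_of_eq i j hi hij)
    · exact absurd hij (fresh i j)
    · exact absurd hij.symm (fresh j i)
    · have := congrFun hij A
      simp only [Sum.elim_inr, freshTable, Option.some.injEq] at this
      exact congrArg Sum.inr (Fin.ext (by omega))

theorem eq_some_getD (hT : IsNullPadded T) {i : ι} (hi : T i ≠ nullTuple R) (A : R) :
    T i A = some ((T i A).getD 0) := by
  obtain ⟨f, hf⟩ := hT.total_of_ne_null i hi
  simp [hf]

theorem injOn_getD (hT : IsNullPadded T) :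
    Set.InjOn (fun i A => (T i A).getD 0) {i | T i ≠ nullTuple R} := fun i hi j hj hij =>
  hT.eq_of_eq i j hi <| funext fun A => by
    rw [hT.eq_some_getD hi, hT.eq_some_getD hj]
    exact congrArg some (congrFun hij A)

variable [Fintype R]

theorem getD_mem_totalTuples [Finite ι] (hT : IsNullPadded T) {i : ι} (hi : T i ≠ nullTuple R) :
    (fun A => (T i A).getD 0) ∈ totalTuples T :=
  mem_totalTuples.mpr fun A => ⟨i, hT.eq_some_getD hi A⟩

variable [Fintype ι]

open Classical in
theorem card_sub_prod_le_card_null (hT : IsNullPadded T) :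
    Fintype.card ι - ∏ A, (VD T A).ncard ≤ #{i | T i = nullTuple R} := by
  have hnonnull : #{i | T i ≠ nullTuple R} ≤ ∏ A, (VD T A).ncard := by
    rw [← card_totalTuples]
    refine card_le_card_of_injOn (fun i A => (T i A).getD 0)
      (fun i hi => hT.getD_mem_totalTuples (by simpa using hi)) ?_
    simpa using hT.injOn_getD
  have hsplit : #{i | T i = nullTuple R} + #{i | T i ≠ nullTuple R} = Fintype.card ι :=
    card_filter_add_card_filter_not _
  omega

theorem spKey_of_card_le_prod (hT : IsNullPadded T)
    (hcard : Fintype.card ι ≤ ∏ A, (VD T A).ncard) : spKey T Set.univ := by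
  classical
  obtain ⟨T', hinj, hmem, hext⟩ := exists_injective_extension_of_card_le
    (s := {i | T i ≠ nullTuple R}) (f := fun i A => (T i A).getD 0)
    (hcard.trans_eq (card_totalTuples T).symm)
    (fun i hi => hT.getD_mem_totalTuples (by simpa using hi)) (by simpa using hT.injOn_getD)
  refine ⟨T', fun i A => ⟨?_, mem_totalTuples.mp (hmem i) A⟩, fun i j hij =>
    hinj (funext fun A => hij A trivial)⟩
  by_cases hi : T i = nullTuple R
  · exact .inl (congrFun hi A)
  · rw [hext i (by simpa using hi)]
    exact .inr (hT.eq_some_getD hi A)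

theorem g3KeyNum_univ (hT : IsNullPadded T) :
    g3KeyNum T Set.univ = Fintype.card ι - ∏ A, (VD T A).ncard := by
  classical
  refine le_antisymm (Nat.sInf_le ?_) (by simpa using card_sub_prod_le_g3KeyNum T univ)
  obtain ⟨S, hnull, hcard⟩ := exists_subset_card_eq hT.card_sub_prod_le_card_null
  refine ⟨S, hcard, (hT.comp_injective Subtype.val_injective).spKey_of_card_le_prod ?_⟩
  have hVD (A : R) : VD (T ∘ (Subtype.val : {i // i ∉ S} → ι)) A = VD T A := by
    refine (VD_comp_subset T _ A).antisymm fun v ⟨i, hi⟩ => ⟨⟨i, fun hiS => ?_⟩, hi⟩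
    have : T i = nullTuple R := by simpa using hnull hiS
    simp [this, nullTuple] at hi
  have hcompl : Fintype.card {i // i ∉ S} = Fintype.card ι - #S := by
    simp [Fintype.card_subtype_compl]
  simp only [hVD]
  omega

theorem g5KeyNum_univ (hT : IsNullPadded T) :
    g5KeyNum T Set.univ = sInf {t | Fintype.card ι + t ≤ ∏ A, ((VD T A).ncard + t)} := by
  refine congrArg sInf (Set.ext fun t => ⟨fun ⟨S, hS⟩ => ?_, fun ht => ?_⟩)
  · rw [← coe_univ] at hS
    simpa using card_add_card_le_prod_of_spKey_sumElim hS
  · obtain ⟨b, hb⟩ := exists_forall_mem_VD_lt T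
    refine ⟨freshTable R b t, (hT.sumElim_freshTable hb t).spKey_of_card_le_prod ?_⟩
    have hVD (A : R) : (VD (Sum.elim T (freshTable R b t)) A).ncard = (VD T A).ncard + t := by
      have hdisj : Disjoint (VD T A) (Set.Ico b (b + t)) :=
        Set.disjoint_left.mpr fun v hv hIco => (hb A v hv).not_ge hIco.1
      rw [VD_sumElim, VD_freshTable, Set.ncard_union_eq hdisj (finite_VD T A)]
      simp
    simpa [hVD] using ht

end IsNullPadded

/-- The table over two attributes with total rows `(0, 0), (0, 1), …, (0, c - 1)` followed by `n`
rows `(⊥, ⊥)`. -/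
def paddedColumn (c n : ℕ) (i : Fin (c + n)) : Tuple (Fin 2) :=
  if i < c then ![some 0, some i] else nullTuple (Fin 2)

section PaddedColumn

variable {c n : ℕ}

theorem isNullPadded_paddedColumn : IsNullPadded (paddedColumn c n) where
  total_of_ne_null i hi := by
    have hic : (i : ℕ) < c := by_contra fun h => hi (if_neg h)
    refine ⟨![0, i], funext fun A => ?_⟩
    fin_cases A <;> simp [paddedColumn, hic]
  eq_of_eq i j hi hij := by
    have hic : (i : ℕ) < c := by_contra fun h => hi (if_neg h)
    have := congrFun hij 1
    by_cases hjc : (j : ℕ) < c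
    · simpa [paddedColumn, hic, hjc, Fin.ext_iff] using this
    · simp [paddedColumn, hic, hjc, nullTuple] at this

theorem VD_paddedColumn_zero (hc : 0 < c) : VD (paddedColumn c n) 0 = {0} := by
  ext v
  constructor
  · rintro ⟨i, hi⟩
    by_cases hic : (i : ℕ) < c <;> simp_all [paddedColumn, nullTuple]
  · rintro rfl
    exact ⟨⟨0, by omega⟩, by simp [paddedColumn, hc]⟩

theorem VD_paddedColumn_one : VD (paddedColumn c n) 1 = Set.Iio c := by
  ext v
  constructor
  · rintro ⟨i, hi⟩
    by_cases hic : (i : ℕ) < c <;> simp_all [paddedColumn, nullTuple]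
  · intro (hv : v < c)
    exact ⟨⟨v, by omega⟩, by simp [paddedColumn, hv]⟩

theorem g3KeyNum_paddedColumn (hc : 0 < c) : g3KeyNum (paddedColumn c n) Set.univ = n := by
  simp [isNullPadded_paddedColumn.g3KeyNum_univ, VD_paddedColumn_zero hc, VD_paddedColumn_one]

theorem g5KeyNum_paddedColumn (hc : 0 < c) :
    g5KeyNum (paddedColumn c n) Set.univ = sInf {t | n ≤ t * (c + t)} := by
  have hiff (t : ℕ) : c + n + t ≤ (1 + t) * (c + t) ↔ n ≤ t * (c + t) := by
    rw [one_add_mul]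
    omega
  simp [isNullPadded_paddedColumn.g5KeyNum_univ, VD_paddedColumn_zero hc, VD_paddedColumn_one, hiff]

theorem g3Key_sub_g5Key_paddedColumn (hc : 0 < c) {t : ℕ} (ht : IsLeast {t | n ≤ t * (c + t)} t) :
    g3Key (paddedColumn c n) Set.univ - g5Key (paddedColumn c n) Set.univ =
      ((n : ℚ) - t) / (c + n : ℕ) := by
  rw [g3Key, g5Key, g3KeyNum_paddedColumn hc, g5KeyNum_paddedColumn hc, ht.csInf_eq,
    Fintype.card_fin, sub_div]

end PaddedColumn

theorem isLeast_succ_of_mul_le_of_lt_mul {p d r k c : ℕ} (hle : r * d ≤ p) (hlt : p < (r + 1) * d)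
    (hk : r + 1 ≤ k) (hc : c + (r + 1) = d * k) :
    IsLeast {t | p * k + (r + 1) ≤ t * (c + t)} (r + 1) := by
  constructor
  · calc p * k + (r + 1) ≤ (p + 1) * k := by rw [add_one_mul]; omega
      _ ≤ (r + 1) * d * k := Nat.mul_le_mul_right k hlt
      _ = (r + 1) * (c + (r + 1)) := by rw [hc, mul_assoc]
  · intro s (hs : p * k + (r + 1) ≤ s * (c + s))
    by_contra! hsr
    have hsp : s * (c + s) ≤ p * k :=
      calc s * (c + s) ≤ r * (d * k) := Nat.mul_le_mul (by omega) (by omega)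
        _ = r * d * k := (mul_assoc r d k).symm
        _ ≤ p * k := Nat.mul_le_mul_right k hle
    omega

/-- For every rational `0 ≤ p/q < 1` and every `N`, there is a table
over a two-attribute schema with more than `N` rows such that
`g₃({A₁,A₂}) − g₅({A₁,A₂}) = p/q`. -/
theorem stmt2 (p q : ℕ) (hq : 0 < q) (hpq : p < q) (N : ℕ) :
    ∃ m : ℕ, N < m ∧ ∃ T : Fin m → Tuple (Fin 2),
      g3Key T (Set.univ : Set (Fin 2)) - g5Key T (Set.univ : Set (Fin 2)) = (p : ℚ) / q := by
  obtain ⟨d, rfl⟩ : ∃ d, q = p + d := ⟨q - p, by omega⟩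
  have hd : 0 < d := by omega
  obtain ⟨r, hle, hlt⟩ : ∃ r, r * d ≤ p ∧ p < (r + 1) * d :=
    ⟨p / d, Nat.div_mul_le_self p d, by simpa only [add_one_mul] using Nat.lt_div_mul_add hd⟩
  obtain ⟨k, hk⟩ : ∃ k, N + (r + 1) < k := ⟨_, Nat.lt_succ_self _⟩
  have hkd : k ≤ d * k := Nat.le_mul_of_pos_left k hd
  obtain ⟨c, hc⟩ : ∃ c, c + (r + 1) = d * k := ⟨d * k - (r + 1), by omega⟩
  have hrows : c + (p * k + (r + 1)) = (p + d) * k := by rw [add_mul]; omega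
  have hleast := isLeast_succ_of_mul_le_of_lt_mul hle hlt (by omega) hc
  refine ⟨c + (p * k + (r + 1)), by omega, paddedColumn c (p * k + (r + 1)), ?_⟩
  have hk0 : (k : ℚ) ≠ 0 := Nat.cast_ne_zero.mpr (by omega)
  rw [g3Key_sub_g5Key_paddedColumn (by omega) hleast, hrows, Nat.cast_add (p * k),
    add_sub_cancel_right, Nat.cast_mul, Nat.cast_mul, mul_div_mul_right _ _ hk0]
end

section
/- Let T = (t₁,…,tₘ) be an incomplete table over schema R, K ⊆ R, and for a tuple t let ℓ(t) be the number of K-total tuples t* ∈ ∏_{A∈K} VD(A) weakly similar to t on K. Assume the tuples are indexed so that ℓ(t₁) ≤ ℓ(t₂) ≤ … ≤ ℓ(tₘ). Let j = max{ i : ℓ(tᵢ) < i } (with j = 0 if ℓ(tᵢ) ≥ i for all i), let T_j = {t₁,…,t_j}, let T_j* be the set of K-total tuples over ∏_{A∈K} VD(A) weakly similar on K to some tuple of T_j, and let G* be the subgraph of the K-extension bipartite graph G of T induced on T_j ∪ T_j*. Then ν(G) = ν(G*) + (m − j), where ν denotes maximum matching size. -/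
/-!
Every matching of `G` splits into a matching of `G*` and a matching of the tuples outside `T_j`,
and the latter has at most one edge per tuple. Conversely, a maximum matching of `G*` extends
greedily to every tuple outside `T_j`: when `tᵢ` is reached, only tuples preceding it have been
matched, so at most `i - 1` of its at least `i` neighbours are taken.
-/

open Finset

theorem card_filter_le_val (m j : ℕ) : #{i : Fin m | j ≤ i} = m - j := by
  have h := card_filter_add_card_filter_not (s := univ) (fun i : Fin m => i.1 < j)
  simp only [not_lt, card_univ, Fintype.card_fin, Fin.card_filter_val_lt] at h
  omega

namespace IsExtMatching

variable {R ι : Type} {T : ι → Tuple R} {K : Set R} {M N : Finset (ι × (↥K → ℕ))}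

protected theorem empty : IsExtMatching T K ∅ := by
  simp [IsExtMatching]

protected theorem subset (hM : IsExtMatching T K M) (hNM : N ⊆ M) : IsExtMatching T K N :=
  ⟨fun e he => hM.1 e (hNM he), fun e he e' he' => hM.2.1 e (hNM he) e' (hNM he'),
    fun e he e' he' => hM.2.2 e (hNM he) e' (hNM he')⟩

theorem card_le_card_of_forall_fst_mem (hM : IsExtMatching T K M) {S : Finset ι}
    (hS : ∀ e ∈ M, e.1 ∈ S) : #M ≤ #S :=
  card_le_card_of_injOn Prod.fst hS fun e he e' he' => hM.2.1 e he e' he'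

protected theorem insert [DecidableEq (ι × (↥K → ℕ))] (hM : IsExtMatching T K M)
    {i : ι} {f : ↥K → ℕ} (hdom : ∀ A : ↥K, f A ∈ VD T A)
    (hadj : adjExt K (T i) f) (hi : ∀ e ∈ M, e.1 ≠ i) (hf : ∀ e ∈ M, e.2 ≠ f) :
    IsExtMatching T K (insert (i, f) M) := by
  obtain ⟨hedge, hfst, hsnd⟩ := hM
  simp only [IsExtMatching, forall_mem_insert]
  exact ⟨⟨⟨⟨hdom, i, hadj⟩, hadj⟩, hedge⟩,
    ⟨⟨fun _ => trivial, fun e he h => absurd h.symm (hi e he)⟩,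
      fun e he => ⟨fun h => absurd h (hi e he), hfst e he⟩⟩,
    ⟨⟨fun _ => trivial, fun e he h => absurd h.symm (hf e he)⟩,
      fun e he => ⟨fun h => absurd h (hf e he), hsnd e he⟩⟩⟩

theorem exists_insert_of_card_lt_ellK [DecidableEq (ι × (↥K → ℕ))] (hM : IsExtMatching T K M)
    {i : ι} (hi : ∀ e ∈ M, e.1 ≠ i) (hcard : #M < ellK T K (T i)) :
    ∃ f, IsExtMatching T K (insert (i, f) M) := by
  classical
  have hused : (M.image Prod.snd : Set (↥K → ℕ)).ncard < ellK T K (T i) := by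
    rw [Set.ncard_coe_finset]
    exact card_image_le.trans_lt hcard
  obtain ⟨f, ⟨hdom, hadj⟩, hfree⟩ := Set.exists_mem_notMem_of_ncard_lt_ncard hused
  exact ⟨f, hM.insert hdom hadj hi fun e he hef => hfree (mem_image.2 ⟨e, he, hef⟩)⟩

theorem exists_card_eq_add_of_card_lt_ellK [LinearOrder ι] (hM : IsExtMatching T K M) (S : Finset ι)
    (hMS : ∀ e ∈ M, e.1 ∉ S) (hS : ∀ i ∈ S, #M + #{k ∈ S | k < i} < ellK T K (T i)) :
    ∃ N, IsExtMatching T K N ∧ (∀ e ∈ N, e ∈ M ∨ e.1 ∈ S) ∧ #N = #M + #S := by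
  classical
  induction S using Finset.induction_on_max with
  | empty => exact ⟨M, hM, fun e he => .inl he, rfl⟩
  | insert i S hlt ih =>
    have hiS : i ∉ S := fun h => (hlt i h).false
    obtain ⟨N, hN, hNS, hNcard⟩ := ih (fun e he h => hMS e he (mem_insert_of_mem h))
      fun k hk => lt_of_le_of_lt (by gcongr; exact subset_insert i S) (hS k (mem_insert_of_mem hk))
    have hfresh : ∀ e ∈ N, e.1 ≠ i := by
      rintro e he rfl
      exact (hNS e he).elim (fun heM => hMS e heM (mem_insert_self _ _)) hiS
    have hNlt : #N < ellK T K (T i) := by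
      have hbelow : {k ∈ insert i S | k < i} = S := by
        rw [filter_insert, if_neg (lt_irrefl i), filter_true_of_mem hlt]
      simpa only [hbelow, hNcard] using hS i (mem_insert_self i S)
    obtain ⟨f, hf⟩ := hN.exists_insert_of_card_lt_ellK hfresh hNlt
    refine ⟨_, hf, forall_mem_insert .. |>.2 ⟨.inr (mem_insert_self i S), fun e he => ?_⟩, ?_⟩
    · exact (hNS e he).imp_right mem_insert_of_mem
    · rw [card_insert_of_notMem fun h => hfresh _ h rfl, card_insert_of_notMem hiS, hNcard,
        add_assoc]

end IsExtMatching

section MatchingNumber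

variable {R ι : Type}

theorem bddAbove_card_isExtMatching [Finite ι] (T : ι → Tuple R) (K : Set R) :
    BddAbove {n | ∃ M : Finset (ι × (↥K → ℕ)), IsExtMatching T K M ∧ #M = n} := by
  have := Fintype.ofFinite ι
  refine ⟨Fintype.card ι, ?_⟩
  rintro _ ⟨M, hM, rfl⟩
  exact hM.card_le_card_of_forall_fst_mem fun e _ => mem_univ e.1

theorem IsExtMatching.card_le_nuExt [Finite ι] {T : ι → Tuple R} {K : Set R}
    {M : Finset (ι × (↥K → ℕ))} (hM : IsExtMatching T K M) : #M ≤ nuExt T K := by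
  rw [nuExt]
  exact le_csSup (bddAbove_card_isExtMatching T K) ⟨M, hM, rfl⟩

theorem exists_isExtMatching_card_eq_nuExt [Finite ι] (T : ι → Tuple R) (K : Set R) :
    ∃ M : Finset (ι × (↥K → ℕ)), IsExtMatching T K M ∧ #M = nuExt T K :=
  Nat.sSup_mem (by exact ⟨0, ∅, .empty, rfl⟩) (bddAbove_card_isExtMatching T K)

variable {m : ℕ}

theorem bddAbove_card_isExtMatching_star (T : Fin m → Tuple R) (K : Set R) (j : ℕ) :
    BddAbove {n | ∃ M : Finset (Fin m × (↥K → ℕ)), IsExtMatching T K M ∧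
      (∀ e ∈ M, e.1.1 < j ∧ e.2 ∈ TjStar T K j) ∧ #M = n} := by
  refine (bddAbove_card_isExtMatching T K).mono ?_
  rintro n ⟨M, hM, -, hn⟩
  exact ⟨M, hM, hn⟩

theorem IsExtMatching.card_le_nuExtStar {T : Fin m → Tuple R} {K : Set R} {j : ℕ}
    {M : Finset (Fin m × (↥K → ℕ))} (hM : IsExtMatching T K M) (hMj : ∀ e ∈ M, e.1.1 < j) :
    #M ≤ nuExtStar T K j := by
  rw [nuExtStar]
  exact le_csSup (bddAbove_card_isExtMatching_star T K j) ⟨M, hM,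
    fun e he => ⟨hMj e he, (hM.1 e he).1.1, e.1, hMj e he, (hM.1 e he).2⟩, rfl⟩

theorem exists_isExtMatching_card_eq_nuExtStar (T : Fin m → Tuple R) (K : Set R) (j : ℕ) :
    ∃ M : Finset (Fin m × (↥K → ℕ)), IsExtMatching T K M ∧ (∀ e ∈ M, e.1.1 < j) ∧
      #M = nuExtStar T K j := by
  obtain ⟨M, hM, hMj, hcard⟩ := Nat.sSup_mem
    (by exact ⟨0, ∅, .empty, by simp, rfl⟩) (bddAbove_card_isExtMatching_star T K j)
  exact ⟨M, hM, fun e he => (hMj e he).1, hcard⟩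

theorem nuExt_le_nuExtStar_add (T : Fin m → Tuple R) (K : Set R) (j : ℕ) :
    nuExt T K ≤ nuExtStar T K j + #{i : Fin m | j ≤ i} := by
  obtain ⟨M, hM, hcard⟩ := exists_isExtMatching_card_eq_nuExt T K
  rw [← hcard, ← card_filter_add_card_filter_not (s := M) fun e => e.1.1 < j]
  gcongr
  · exact (hM.subset (filter_subset _ M)).card_le_nuExtStar fun e he => (mem_filter.1 he).2
  · refine (hM.subset (filter_subset _ M)).card_le_card_of_forall_fst_mem fun e he => ?_
    simpa using (mem_filter.1 he).2

theorem nuExtStar_add_le_nuExt (T : Fin m → Tuple R) (K : Set R) (j : ℕ)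
    (hdeg : ∀ i : Fin m, j ≤ i → i < ellK T K (T i)) :
    nuExtStar T K j + #{i : Fin m | j ≤ i} ≤ nuExt T K := by
  obtain ⟨M, hM, hMj, hcard⟩ := exists_isExtMatching_card_eq_nuExtStar T K j
  have hdisj : ∀ e ∈ M, e.1 ∉ ({i | j ≤ i} : Finset (Fin m)) := by simpa using hMj
  have hbelow (i : Fin m) (hi : j ≤ i) :
      #M + #{k ∈ ({k | j ≤ k} : Finset (Fin m)) | k < i} ≤ i := by
    have hMi : #M ≤ #{k ∈ Iio i | k.1 < j} :=
      hM.card_le_card_of_forall_fst_mem fun e he =>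
        mem_filter.2 ⟨mem_Iio.2 ((hMj e he).trans_le hi), hMj e he⟩
    calc #M + #{k ∈ ({k | j ≤ k} : Finset (Fin m)) | k < i}
        ≤ #{k ∈ Iio i | k.1 < j} + #{k ∈ Iio i | ¬ k.1 < j} := by
          gcongr
          intro k
          simp +contextual
      _ = i := by rw [card_filter_add_card_filter_not, Fin.card_Iio]
  obtain ⟨N, hN, -, hNcard⟩ := hM.exists_card_eq_add_of_card_lt_ellK {i | j ≤ i} hdisj
    fun i hi => (hbelow i (mem_filter.1 hi).2).trans_lt (hdeg i (mem_filter.1 hi).2)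
  rw [← hcard, ← hNcard]
  exact hN.card_le_nuExt

end MatchingNumber

theorem stmt7_general {R : Type} {m : ℕ} (T : Fin m → Tuple R) (K : Set R) (j : ℕ)
    (hdeg : ∀ i : Fin m, j ≤ i → i < ellK T K (T i)) :
    nuExt T K = nuExtStar T K j + #{i : Fin m | j ≤ i} :=
  (nuExt_le_nuExtStar_add T K j).antisymm (nuExtStar_add_le_nuExt T K j hdeg)

/-- With tuples sorted by `ℓ` and `j = max{ i : ℓ(tᵢ) < i }`
(1-based; `j = 0` if no such `i`), `ν(G) = ν(G*) + (m − j)`. -/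
theorem stmt7 {R : Type} [Fintype R] {m : ℕ} (T : Fin m → Tuple R) (K : Set R) (j : ℕ)
    (hsort : ∀ i i' : Fin m, i ≤ i' → ellK T K (T i) ≤ ellK T K (T i'))
    (hjm : j ≤ m)
    (hmax : ∀ i : Fin m, j < i.1 + 1 → i.1 + 1 ≤ ellK T K (T i))
    (hmem : ∀ hj : 0 < j, ellK T K (T ⟨j - 1, by omega⟩) < j) :
    nuExt T K = nuExtStar T K j + (m - j) := by
  rw [stmt7_general T K j fun i hi => hmax i (Nat.lt_succ_of_le hi), card_filter_le_val]
end

section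
/- There exists an incomplete table T over a schema R and a family 𝒦 of subsets of R such that g₃(𝒦) > max{ g₃(K) : K ∈ 𝒦 }. In particular, for R = {A₁,A₂,A₃}, the four-tuple table T with rows t₁ = (1, ⊥, 1), t₂ = (1, 2, 2), t₃ = (2, 1, 1), t₄ = (2, 1, 1), and 𝒦 = {{A₁,A₂}, {A₂,A₃}}, satisfies g₃({A₁,A₂}) = g₃({A₂,A₃}) = 1/4 while g₃(𝒦) > 1/4. -/
/-!
Rows `t₃` and `t₄` are equal and total, so one of them has to be deleted for any key to hold.
Deleting `t₄` suffices for `{A₁, A₂}` if the missing value of `t₁` is filled with `1`, and for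
`{A₂, A₃}` if it is filled with `2`. The two keys together need a second deletion: as long as `t₁`,
`t₂` and one copy of `t₃` survive, filling with `2` makes `t₁` collide with `t₂` on `{A₁, A₂}`, and
filling with `1` makes it collide with `t₃` on `{A₂, A₃}`.
-/

section General

variable {R ι : Type} {T : ι → Tuple R} {𝒦 : Set (Set R)} {K : Set R} {i j : ι}

/-- The table `T ∖ S`, indexed by the rows that survive. Reducible, so that it unfolds to the form
in which the definitions of `g₃` mention it. -/
abbrev removeTuples (T : ι → Tuple R) (S : Finset ι) : {i : ι // i ∉ S} → Tuple R :=
  fun i => T i.1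

/-- A completion of the tuple `t` over the active domains of `T`, i.e. a row that an spWorld of `T`
may have in place of `t`. -/
def IsCompletion (T : ι → Tuple R) (t : Tuple R) (f : R → ℕ) : Prop :=
  ∀ A, (t A = none ∨ t A = some (f A)) ∧ f A ∈ VD T A

theorem IsSpWorld.isCompletion {T' : ι → R → ℕ} (h : IsSpWorld T T') (i : ι) :
    IsCompletion T (T i) (T' i) :=
  h i

theorem IsCompletion.eq_some {t : Tuple R} {f : R → ℕ} (h : IsCompletion T t f) {A : R}
    (hA : t A ≠ none) : t A = some (f A) :=
  (h A).1.resolve_left hA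

theorem spKeySystem_singleton : spKeySystem T {K} ↔ spKey T K := by
  simp only [spKeySystem, spKey, Set.mem_singleton_iff, forall_eq]

theorem spKeySystem_of_isEmpty [IsEmpty ι] : spKeySystem T 𝒦 :=
  ⟨isEmptyElim, isEmptyElim, fun _ _ => isEmptyElim⟩

theorem not_spKeySystem_of_forall_isCompletion
    (h : ∀ f, IsCompletion T (T i) f → ∃ K ∈ 𝒦, ∃ j ≠ i, ∀ A ∈ K, T j A = some (f A)) :
    ¬ spKeySystem T 𝒦 := by
  rintro ⟨T', hworld, hkeys⟩
  obtain ⟨K, hK, j, hji, hagree⟩ := h (T' i) (hworld.isCompletion i)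
  refine hji (hkeys K hK j i fun A hA => ?_)
  have hrow : T j A = some (T' j A) :=
    (hworld.isCompletion j).eq_some (by simp [hagree A hA])
  exact Option.some.inj (hrow.symm.trans (hagree A hA))

theorem not_spKeySystem_of_kTotal_of_eqOn (hK : K ∈ 𝒦) (htotal : KTotal K (T i))
    (heq : Set.EqOn (T i) (T j) K) (hij : i ≠ j) : ¬ spKeySystem T 𝒦 :=
  not_spKeySystem_of_forall_isCompletion fun _ hf =>
    ⟨K, hK, j, hij.symm, fun A hA => (heq hA).symm.trans (hf.eq_some (htotal A hA))⟩

theorem mem_or_mem_of_spKeySystem_removeTuples {S : Finset ι} (hK : K ∈ 𝒦)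
    (htotal : KTotal K (T i)) (heq : Set.EqOn (T i) (T j) K) (hij : i ≠ j)
    (h : spKeySystem (removeTuples T S) 𝒦) : i ∈ S ∨ j ∈ S := by
  by_contra! hS
  exact not_spKeySystem_of_kTotal_of_eqOn (i := ⟨i, hS.1⟩) (j := ⟨j, hS.2⟩) hK htotal heq
    (Subtype.coe_ne_coe.mp hij) h

theorem g3SysNum_singleton : g3SysNum T {K} = g3KeyNum T K := by
  simp only [g3SysNum, g3KeyNum, spKeySystem_singleton]

theorem g3SysNum_le_card {S : Finset ι} (h : spKeySystem (removeTuples T S) 𝒦) :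
    g3SysNum T 𝒦 ≤ S.card :=
  Nat.sInf_le ⟨S, rfl, h⟩

theorem le_g3SysNum_iff [Finite ι] {n : ℕ} :
    n ≤ g3SysNum T 𝒦 ↔ ∀ S : Finset ι, spKeySystem (removeTuples T S) 𝒦 → n ≤ S.card := by
  refine ⟨fun h S hS => h.trans (g3SysNum_le_card hS), fun h => ?_⟩
  have := Fintype.ofFinite ι
  have : IsEmpty {i : ι // i ∉ Finset.univ} := ⟨fun i => i.2 (Finset.mem_univ _)⟩
  refine le_csInf ⟨_, Finset.univ, rfl, spKeySystem_of_isEmpty⟩ ?_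
  rintro _ ⟨S, rfl, hS⟩
  exact h S hS

end General

section Example

/-- The four-row table of the theorem, with rows and attributes numbered from `0`. -/
def exampleTable : Fin 4 → Tuple (Fin 3) :=
  ![![some 1, none, some 1], ![some 1, some 2, some 2],
    ![some 2, some 1, some 1], ![some 2, some 1, some 1]]

/-- `exampleTable` with its missing value replaced by `a`. -/
def filledTable (a : ℕ) : Fin 4 → Fin 3 → ℕ :=
  ![![1, a, 1], ![1, 2, 2], ![2, 1, 1], ![2, 1, 1]]

variable {K : Set (Fin 3)} {𝒦 : Set (Set (Fin 3))} {S : Finset (Fin 4)}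

theorem isSpWorld_filledTable {a : ℕ} (ha : a = 1 ∨ a = 2) :
    IsSpWorld (removeTuples exampleTable {3}) fun i => filledTable a i.1 := by
  simp only [IsSpWorld, VD, Set.mem_ofPred_eq]
  rcases ha with rfl | rfl <;> decide

theorem spKey_zero_one_removeTuples_exampleTable :
    spKey (removeTuples exampleTable {3}) {0, 1} := by
  refine ⟨_, isSpWorld_filledTable (Or.inl rfl), ?_⟩
  simp only [Set.mem_insert_iff, Set.mem_singleton_iff, forall_eq_or_imp, forall_eq]
  decide

theorem spKey_one_two_removeTuples_exampleTable :
    spKey (removeTuples exampleTable {3}) {1, 2} := by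
  refine ⟨_, isSpWorld_filledTable (Or.inr rfl), ?_⟩
  simp only [Set.mem_insert_iff, Set.mem_singleton_iff, forall_eq_or_imp, forall_eq]
  decide

theorem two_mem_or_three_mem_of_spKeySystem_exampleTable (hK : K ∈ 𝒦)
    (h : spKeySystem (removeTuples exampleTable S) 𝒦) : 2 ∈ S ∨ 3 ∈ S := by
  have htotal : ∀ A, exampleTable 2 A ≠ none := by decide
  exact mem_or_mem_of_spKeySystem_removeTuples hK (fun A _ => htotal A) (fun _ _ => rfl)
    (by decide) h

theorem g3Key_exampleTable_of_spKey (h : spKey (removeTuples exampleTable {3}) K) :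
    g3Key exampleTable K = 1 / 4 := by
  have hle : g3SysNum exampleTable {K} ≤ 1 := g3SysNum_le_card (spKeySystem_singleton.mpr h)
  have hge : 1 ≤ g3SysNum exampleTable {K} := by
    refine le_g3SysNum_iff.mpr fun S hS => Finset.card_pos.mpr ?_
    rcases two_mem_or_three_mem_of_spKeySystem_exampleTable (Set.mem_singleton K) hS with h2 | h3
    exacts [⟨2, h2⟩, ⟨3, h3⟩]
  have hnum : g3KeyNum exampleTable K = 1 := g3SysNum_singleton ▸ le_antisymm hle hge
  simp [g3Key, hnum]

theorem eq_one_or_eq_two_of_mem_vd_exampleTable {v : ℕ}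
    (hv : v ∈ VD (removeTuples exampleTable S) 1) : v = 1 ∨ v = 2 := by
  have hcolumn : ∀ i, exampleTable i 1 = none ∨ exampleTable i 1 = some 1 ∨
      exampleTable i 1 = some 2 := by decide
  obtain ⟨i, hi : exampleTable i 1 = some v⟩ := hv
  simpa [hi] using hcolumn i

theorem not_spKeySystem_exampleTable_of_notMem {r : Fin 4} (hr : exampleTable r = exampleTable 2)
    (h0 : 0 ∉ S) (h1 : 1 ∉ S) (hrS : r ∉ S) :
    ¬ spKeySystem (removeTuples exampleTable S) {{0, 1}, {1, 2}} := by
  refine not_spKeySystem_of_forall_isCompletion (i := ⟨0, h0⟩) fun f hf => ?_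
  have hf0 : some 1 = some (f 0) := hf.eq_some (A := 0) (Option.some_ne_none 1)
  have hf2 : some 1 = some (f 2) := hf.eq_some (A := 2) (Option.some_ne_none 1)
  rcases eq_one_or_eq_two_of_mem_vd_exampleTable (hf 1).2 with hf1 | hf1
  · have hr0 : r ≠ 0 := by rintro rfl; exact absurd hr (by decide)
    refine ⟨{1, 2}, by simp, ⟨r, hrS⟩, by simpa using hr0, ?_⟩
    rintro A (rfl | rfl)
    · rw [hf1, removeTuples, hr]; rfl
    · rw [← hf2, removeTuples, hr]; rfl
  · refine ⟨{0, 1}, by simp, ⟨1, h1⟩, by simp, ?_⟩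
    rintro A (rfl | rfl)
    · rw [← hf0]; rfl
    · rw [hf1]; rfl

theorem two_le_g3SysNum_exampleTable : 2 ≤ g3SysNum exampleTable {{0, 1}, {1, 2}} := by
  refine le_g3SysNum_iff.mpr fun S hS => ?_
  have h23 : 2 ∈ S ∨ 3 ∈ S := two_mem_or_three_mem_of_spKeySystem_exampleTable (Or.inl rfl) hS
  have h012 : 0 ∈ S ∨ 1 ∈ S ∨ 2 ∈ S := by
    by_contra! h
    exact not_spKeySystem_exampleTable_of_notMem (r := 2) rfl h.1 h.2.1 h.2.2 hS
  have h013 : 0 ∈ S ∨ 1 ∈ S ∨ 3 ∈ S := by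
    by_contra! h
    exact not_spKeySystem_exampleTable_of_notMem (r := 3) rfl h.1 h.2.1 h.2.2 hS
  -- No single row lies in all of `{2, 3}`, `{0, 1, 2}` and `{0, 1, 3}`.
  clear hS
  revert S
  decide

theorem one_fourth_lt_g3Sys_exampleTable :
    (1 / 4 : ℚ) < g3Sys exampleTable {{0, 1}, {1, 2}} := by
  have h : (2 : ℚ) ≤ g3SysNum exampleTable {{0, 1}, {1, 2}} :=
    mod_cast two_le_g3SysNum_exampleTable
  rw [g3Sys, Fintype.card_fin]
  push_cast
  linarith

end Example

/-- There is a table and a key family with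
`g₃(𝒦) > max{ g₃(K) : K ∈ 𝒦 }`; in particular the concrete four-row table over
`{A₁,A₂,A₃}` with `𝒦 = {{A₁,A₂},{A₂,A₃}}` has
`g₃({A₁,A₂}) = g₃({A₂,A₃}) = 1/4 < g₃(𝒦)`. -/
theorem stmt12 :
    ∃ (Rt ιt : Type) (_ : Fintype Rt) (_ : Fintype ιt) (T : ιt → Tuple Rt)
      (𝒦 : Set (Set Rt)), 𝒦.Finite ∧
        (∀ K ∈ 𝒦, g3Key T K < g3Sys T 𝒦) ∧
    (let T : Fin 4 → Tuple (Fin 3) :=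
      ![![some 1, none, some 1], ![some 1, some 2, some 2],
        ![some 2, some 1, some 1], ![some 2, some 1, some 1]]
     let K1 : Set (Fin 3) := {0, 1}
     let K2 : Set (Fin 3) := {1, 2}
     g3Key T K1 = 1/4 ∧ g3Key T K2 = 1/4 ∧ (1/4 : ℚ) < g3Sys T {K1, K2}) := by
  have hK1 : g3Key exampleTable {0, 1} = 1 / 4 :=
    g3Key_exampleTable_of_spKey spKey_zero_one_removeTuples_exampleTable
  have hK2 : g3Key exampleTable {1, 2} = 1 / 4 :=
    g3Key_exampleTable_of_spKey spKey_one_two_removeTuples_exampleTable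
  have hsys := one_fourth_lt_g3Sys_exampleTable
  refine ⟨Fin 3, Fin 4, inferInstance, inferInstance, exampleTable, {{0, 1}, {1, 2}},
    Set.toFinite _, ?_, hK1, hK2, hsys⟩
  rintro K (rfl | rfl)
  · exact hK1.trans_lt hsys
  · exact hK2.trans_lt hsys
end
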